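/- arXiv:1403.3678 — 6 statements merged into one kernel-verified Lean document; each statement's English description precedes it below -/
import Mathlib

section
/- Let μ be a symmetric probability measure on ℝ and K > 0. Then the symmetrically saturated measure ⌊μ⌋_K^s is again a symmetric probability measure on ℝ. -/
open MeasureTheory Real

/-- A probability measure on ℝ is *symmetric* if the pushforward under negation
equals the measure with density `x ↦ e^{-x}` with respect to it. -/
def IsSymmetricMeasure (μ : Measure ℝ) : Prop :=
  μ.map (fun x => -x) = μ.withDensity (fun x => ENNReal.ofReal (Real.exp (-x)))

/-- The symmetrically saturated measure `⌊μ⌋_K^s`: the restriction of `μ` to `(-K, K)`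
plus `γ·p·δ_{-K} + γ·(1-p)·δ_K`, where `γ = μ {x : |x| ≥ K}` and
`p = e^{-K}/(1+e^{-K})`. -/
noncomputable def symSat (μ : Measure ℝ) (K : ℝ) : Measure ℝ :=
  μ.restrict (Set.Ioo (-K) K)
    + (μ {x : ℝ | K ≤ |x|} * ENNReal.ofReal (Real.exp (-K) / (1 + Real.exp (-K))))
        • Measure.dirac (-K)
    + (μ {x : ℝ | K ≤ |x|} * ENNReal.ofReal (1 - Real.exp (-K) / (1 + Real.exp (-K))))
        • Measure.dirac K

/-!
The law `p • δ_{-K} + (1 - p) • δ_K` is symmetric, because `p` and `1 - p` are the values of the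
sigmoid function at `-K` and `K`, whose quotient is `e^{-K}`. Symmetric measures form a cone that is
stable under restriction to sets invariant under negation, so saturation, which cuts `μ` down to
`(-K, K)` and puts the lost mass `γ` on this two-point law, preserves both symmetry and total mass.
-/

open scoped ENNReal Pointwise

namespace IsSymmetricMeasure

variable {μ ν : Measure ℝ}

theorem add (hμ : IsSymmetricMeasure μ) (hν : IsSymmetricMeasure ν) :
    IsSymmetricMeasure (μ + ν) := by
  unfold IsSymmetricMeasure at *
  rw [Measure.map_add _ _ measurable_neg, withDensity_add_measure, hμ, hν]

theorem const_smul (hμ : IsSymmetricMeasure μ) (c : ℝ≥0∞) : IsSymmetricMeasure (c • μ) := by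
  unfold IsSymmetricMeasure at *
  rw [Measure.map_smul, withDensity_smul_measure, hμ]

theorem restrict (hμ : IsSymmetricMeasure μ) {s : Set ℝ} (hs : MeasurableSet s)
    (hs_neg : -s = s) : IsSymmetricMeasure (μ.restrict s) := by
  unfold IsSymmetricMeasure at *
  calc (μ.restrict s).map (fun x => -x)
      = (μ.restrict (-s)).map (fun x => -x) := by rw [hs_neg]
    _ = (μ.map (fun x => -x)).restrict s := (Measure.restrict_map measurable_neg hs).symm
    _ = (μ.restrict s).withDensity (fun x => ENNReal.ofReal (exp (-x))) := by
      rw [hμ, restrict_withDensity hs]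

end IsSymmetricMeasure

/-- The symmetric probability measure supported on `{-x, x}`, which becomes `δ_0` for `x = 0`. The
weights are written with the sigmoid function, as `sigmoid (-K) = e^{-K}/(1+e^{-K})` is the number
`p` of `symSat`. -/
noncomputable def symDirac (x : ℝ) : Measure ℝ :=
  ENNReal.ofReal (sigmoid (-x)) • Measure.dirac (-x) + ENNReal.ofReal (sigmoid x) • Measure.dirac x

theorem ofReal_sigmoid_mul_ofReal_exp_neg (x : ℝ) :
    ENNReal.ofReal (sigmoid x) * ENNReal.ofReal (exp (-x)) = ENNReal.ofReal (sigmoid (-x)) := by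
  rw [← ENNReal.ofReal_mul (sigmoid_nonneg x), sigmoid_mul_rexp_neg]

instance isProbabilityMeasure_symDirac (x : ℝ) : IsProbabilityMeasure (symDirac x) where
  measure_univ := by
    calc symDirac x Set.univ
        = ENNReal.ofReal (sigmoid (-x)) + ENNReal.ofReal (sigmoid x) := by simp [symDirac]
      _ = ENNReal.ofReal (sigmoid (-x) + sigmoid x) :=
        (ENNReal.ofReal_add (sigmoid_nonneg _) (sigmoid_nonneg _)).symm
      _ = 1 := by rw [sigmoid_neg, sub_add_cancel, ENNReal.ofReal_one]

theorem isSymmetricMeasure_symDirac (x : ℝ) : IsSymmetricMeasure (symDirac x) := by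
  have map_symDirac : (symDirac x).map (fun y => -y) =
      ENNReal.ofReal (sigmoid (-x)) • Measure.dirac x +
        ENNReal.ofReal (sigmoid x) • Measure.dirac (-x) := by
    simp [symDirac, Measure.map_add _ _ measurable_neg, Measure.map_smul,
      Measure.map_dirac' measurable_neg]
  have withDensity_symDirac :
      (symDirac x).withDensity (fun y => ENNReal.ofReal (exp (-y))) =
        ENNReal.ofReal (sigmoid x) • Measure.dirac (-x) +
          ENNReal.ofReal (sigmoid (-x)) • Measure.dirac x := by
    simp only [symDirac, withDensity_add_measure, withDensity_smul_measure, dirac_withDensity,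
      smul_smul, ofReal_sigmoid_mul_ofReal_exp_neg]
    rw [neg_neg]
  rw [IsSymmetricMeasure, map_symDirac, withDensity_symDirac, add_comm]

theorem compl_Ioo_neg_self (K : ℝ) : (Set.Ioo (-K) K)ᶜ = {x : ℝ | K ≤ |x|} := by
  ext x
  rw [Set.mem_compl_iff, Set.mem_Ioo, ← abs_lt, not_lt, Set.mem_ofPred_eq]

theorem symSat_eq_restrict_add_smul_symDirac (μ : Measure ℝ) (K : ℝ) :
    symSat μ K = μ.restrict (Set.Ioo (-K) K) + μ (Set.Ioo (-K) K)ᶜ • symDirac K := by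
  have sigmoid_neg_eq : exp (-K) / (1 + exp (-K)) = sigmoid (-K) := by
    rw [← sigmoid_mul_rexp_neg, sigmoid_def, div_eq_inv_mul]
  have one_sub_sigmoid_neg : 1 - sigmoid (-K) = sigmoid K := by
    rw [← sigmoid_neg, neg_neg]
  rw [symSat, sigmoid_neg_eq, one_sub_sigmoid_neg, compl_Ioo_neg_self, symDirac, smul_add,
    smul_smul, smul_smul, add_assoc]

theorem symSat_univ (μ : Measure ℝ) (K : ℝ) : symSat μ K Set.univ = μ Set.univ := by
  simp [symSat_eq_restrict_add_smul_symDirac, measure_add_measure_compl measurableSet_Ioo]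

instance isProbabilityMeasure_symSat (μ : Measure ℝ) [IsProbabilityMeasure μ] (K : ℝ) :
    IsProbabilityMeasure (symSat μ K) where
  measure_univ := by rw [symSat_univ, measure_univ]

theorem isSymmetricMeasure_symSat {μ : Measure ℝ} (hμ : IsSymmetricMeasure μ) (K : ℝ) :
    IsSymmetricMeasure (symSat μ K) := by
  rw [symSat_eq_restrict_add_smul_symDirac]
  have Ioo_neg_self : -Set.Ioo (-K) K = Set.Ioo (-K) K := by rw [Set.neg_Ioo, neg_neg]
  exact (hμ.restrict measurableSet_Ioo Ioo_neg_self).add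
    ((isSymmetricMeasure_symDirac K).const_smul _)

/-- Symmetric saturation of a symmetric probability measure is again a symmetric
probability measure. -/
theorem symSat_isProbability_and_symmetric (μ : Measure ℝ) [IsProbabilityMeasure μ]
    (hsym : IsSymmetricMeasure μ) (K : ℝ) (hK : 0 < K) :
    IsProbabilityMeasure (symSat μ K) ∧ IsSymmetricMeasure (symSat μ K) :=
  ⟨isProbabilityMeasure_symSat μ K, isSymmetricMeasure_symSat hsym K⟩
end

section
/- For all real numbers x and y, letting f(x,y) = 2·artanh(tanh(x/2)·tanh(y/2)) denote the belief-propagation check-node combination, one has e^{−f(x,y)/2} ≤ e^{−x/2} + e^{−y/2}. -/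
open Real

/-- The inverse hyperbolic tangent, `artanh x = (1/2)·log((1+x)/(1-x))`. -/
noncomputable def artanh (x : ℝ) : ℝ := (1 / 2) * Real.log ((1 + x) / (1 - x))

/- With `u = x / 2` and `v = y / 2`, the addition formulas for `cosh` turn `e ^ (-f(x, y))` into
`cosh (u - v) / cosh (u + v)`. As `2 cosh (u - v) = e ^ (u + v) (e ^ (-2u) + e ^ (-2v))` and
`2 cosh (u + v) ≥ e ^ (u + v)`, this quotient is at most `e ^ (-2u) + e ^ (-2v)`, hence at most
`(e ^ (-u) + e ^ (-v)) ^ 2`; it remains to take square roots. -/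

lemma exp_neg_two_mul_artanh {t : ℝ} (ht : t ∈ Set.Ioo (-1) 1) :
    exp (-(2 * _root_.artanh t)) = (1 - t) / (1 + t) := by
  have hpos : 0 < (1 + t) / (1 - t) :=
    div_pos (neg_lt_iff_pos_add'.mp ht.1) (sub_pos.mpr ht.2)
  rw [_root_.artanh, ← mul_assoc, mul_one_div_cancel two_ne_zero, one_mul, exp_neg,
    exp_log hpos, inv_div]

lemma one_add_tanh_mul_tanh (u v : ℝ) :
    1 + tanh u * tanh v = cosh (u + v) / (cosh u * cosh v) := by
  have hu := (cosh_pos u).ne'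
  have hv := (cosh_pos v).ne'
  rw [tanh_eq_sinh_div_cosh, tanh_eq_sinh_div_cosh, cosh_add]
  field_simp

lemma one_sub_tanh_mul_tanh (u v : ℝ) :
    1 - tanh u * tanh v = cosh (u - v) / (cosh u * cosh v) := by
  simpa only [tanh_neg, cosh_neg, mul_neg, ← sub_eq_add_neg] using one_add_tanh_mul_tanh u (-v)

lemma tanh_mul_tanh_mem_Ioo (u v : ℝ) : tanh u * tanh v ∈ Set.Ioo (-1) 1 := by
  rw [Set.mem_Ioo, ← abs_lt, abs_mul]
  exact mul_lt_one_of_nonneg_of_lt_one_left (abs_nonneg _) (abs_tanh_lt_one u)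
    (abs_tanh_lt_one v).le

lemma exp_neg_two_mul_artanh_tanh_mul_tanh (u v : ℝ) :
    exp (-(2 * _root_.artanh (tanh u * tanh v))) = cosh (u - v) / cosh (u + v) := by
  rw [exp_neg_two_mul_artanh (tanh_mul_tanh_mem_Ioo u v), one_sub_tanh_mul_tanh,
    one_add_tanh_mul_tanh, div_div_div_cancel_right₀ (by positivity)]

lemma two_mul_cosh_sub (u v : ℝ) :
    2 * cosh (u - v) = (exp (-(2 * u)) + exp (-(2 * v))) * exp (u + v) := by
  rw [cosh_eq, add_mul, ← exp_add, ← exp_add]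
  ring_nf

lemma exp_lt_two_mul_cosh (u : ℝ) : exp u < 2 * cosh u := by
  rw [cosh_eq, mul_div_cancel₀ _ two_ne_zero]
  exact lt_add_of_pos_right _ (exp_pos _)

lemma cosh_sub_div_cosh_add_lt (u v : ℝ) :
    cosh (u - v) / cosh (u + v) < exp (-(2 * u)) + exp (-(2 * v)) := by
  rw [← mul_div_mul_left _ _ two_ne_zero, div_lt_iff₀ (by positivity), two_mul_cosh_sub]
  gcongr
  exact exp_lt_two_mul_cosh _

/-- For the belief-propagation check-node combination
`f(x,y) = 2·artanh(tanh(x/2)·tanh(y/2))`, one has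
`e^{-f(x,y)/2} ≤ e^{-x/2} + e^{-y/2}`. -/
theorem battacharyya_checknode_pointwise (x y : ℝ) :
    Real.exp (-(2 * _root_.artanh (Real.tanh (x / 2) * Real.tanh (y / 2))) / 2)
      ≤ Real.exp (-x / 2) + Real.exp (-y / 2) := by
  refine (sq_le_sq₀ (exp_pos _).le (by positivity)).mp ?_
  calc exp (-(2 * _root_.artanh (tanh (x / 2) * tanh (y / 2))) / 2) ^ 2
      = cosh (x / 2 - y / 2) / cosh (x / 2 + y / 2) := by
        rw [← exp_nat_mul, Nat.cast_ofNat, mul_div_cancel₀ _ two_ne_zero,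
          exp_neg_two_mul_artanh_tanh_mul_tanh]
    _ ≤ exp (-(2 * (x / 2))) + exp (-(2 * (y / 2))) := (cosh_sub_div_cosh_add_lt _ _).le
    _ = exp (-x / 2) ^ 2 + exp (-y / 2) ^ 2 := by
        simp only [← exp_nat_mul]
        ring_nf
    _ ≤ (exp (-x / 2) + exp (-y / 2)) ^ 2 :=
        pow_add_pow_le (exp_pos _).le (exp_pos _).le two_ne_zero
end

section
/- Let μ be a probability measure on ℝ and K > 0. Then the Battacharyya parameter of the saturated measure satisfies B(⌊μ⌋_K) ≤ B(μ) + e^{−K/2}. -/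
open MeasureTheory Real

/-- The Battacharyya parameter of a probability measure on ℝ:
`B(μ) = ∫ e^{-x/2} dμ(x)`, a value in `[0, ∞]`. -/
noncomputable def battacharyya (μ : Measure ℝ) : ENNReal :=
  ∫⁻ x, ENNReal.ofReal (Real.exp (-x / 2)) ∂μ

/-- The saturation map `⌊x⌋_K = sgn(x)·min(K,|x|)`. -/
noncomputable def satMap (K x : ℝ) : ℝ := Real.sign x * min K |x|

/-- The saturated measure `⌊μ⌋_K`: pushforward of `μ` under the saturation map. -/
noncomputable def satMeasure (μ : Measure ℝ) (K : ℝ) : Measure ℝ := μ.map (satMap K)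

/-!
Saturation moves no point `x ≤ K` to the left, and moves no point `x > K` to the left of `K`. For a
decreasing integrand the points of the first kind therefore contribute at most as much as before,
while those of the second kind contribute at most the value at `K` times the mass of `(K, ∞)`.
-/

lemma min_le_satMap (K x : ℝ) : min x K ≤ satMap K x := by
  unfold satMap
  rcases lt_trichotomy x 0 with hneg | rfl | hpos
  · rw [Real.sign_of_neg hneg, abs_of_neg hneg]
    linarith [min_le_left x K, min_le_right K (-x)]
  · simp
  · rw [Real.sign_of_pos hpos, abs_of_pos hpos, one_mul, min_comm]

lemma apply_satMap_le_of_antitone {f : ℝ → ENNReal} (hf : Antitone f) (K x : ℝ) :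
    f (satMap K x) ≤ f x + (Set.Ioi K).indicator (fun _ => f K) x := by
  have hmin : f (satMap K x) ≤ f (min x K) := hf (min_le_satMap K x)
  rcases le_or_gt x K with hx | hx
  · rw [min_eq_left hx] at hmin
    exact hmin.trans le_self_add
  · rw [min_eq_right hx.le] at hmin
    rw [Set.indicator_of_mem (Set.mem_Ioi.2 hx)]
    exact hmin.trans le_add_self

lemma lintegral_satMeasure_le_of_antitone {f : ℝ → ENNReal} (hf : Antitone f)
    (μ : Measure ℝ) (K : ℝ) :
    ∫⁻ x, f x ∂satMeasure μ K ≤ ∫⁻ x, f x ∂μ + f K * μ (Set.Ioi K) :=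
  calc ∫⁻ x, f x ∂satMeasure μ K
      ≤ ∫⁻ x, f (satMap K x) ∂μ := lintegral_map_le _ _
    _ ≤ ∫⁻ x, f x + (Set.Ioi K).indicator (fun _ => f K) x ∂μ :=
        lintegral_mono (apply_satMap_le_of_antitone hf K)
    _ = ∫⁻ x, f x ∂μ + f K * μ (Set.Ioi K) := by
        rw [lintegral_add_right _ (measurable_const.indicator measurableSet_Ioi),
          lintegral_indicator_const measurableSet_Ioi]

theorem battacharyya_satMeasure_le_general (μ : Measure ℝ) (K : ℝ) :
    battacharyya (satMeasure μ K) ≤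
      battacharyya μ + ENNReal.ofReal (Real.exp (-K / 2)) * μ (Set.Ioi K) := by
  have hanti : Antitone fun x : ℝ => ENNReal.ofReal (Real.exp (-x / 2)) := fun x y hxy => by
    dsimp only
    gcongr
  exact lintegral_satMeasure_le_of_antitone hanti μ K

/-- The Battacharyya parameter of the saturated measure satisfies
`B(⌊μ⌋_K) ≤ B(μ) + e^{-K/2}`. -/
theorem battacharyya_satMeasure_le (μ : Measure ℝ) [IsProbabilityMeasure μ]
    (K : ℝ) (hK : 0 < K) :
    battacharyya (satMeasure μ K) ≤ battacharyya μ + ENNReal.ofReal (Real.exp (-K / 2)) :=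
  (battacharyya_satMeasure_le_general μ K).trans <| by
    gcongr
    exact mul_le_of_le_one_right' prob_le_one
end

section
/- Let λ₂ ∈ [0,1], let C ≥ 0 and ρ ≥ 0 and K > 0, and write ε = e^{−K/2}. Suppose ξ > 0 satisfies η := λ₂·C·ρ + (1−λ₂)·C·ρ²·ξ < 1 and ξ ≥ ((2−η)/(1−η))·ε. Let (B_n)_{n≥0} be a sequence of nonnegative reals with B₀ ≤ ξ and B_{n+1} ≤ λ₂·C·ρ·B_n + (1−λ₂)·C·ρ²·B_n² + ε for all n. Then for every n, B_n ≤ ξ and B_n ≤ η^n·ξ + ε/(1−η); in particular limsup_n B_n ≤ e^{−K/2}/(1−η). -/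
open Real Filter

/-!
On `[0, ξ]` the convex map `x ↦ a * x + b * x ^ 2 + ε` lies below its chord `x ↦ η * x + ε`,
where `η = a + b * ξ`. As soon as the fixed point `ε / (1 - η)` of this affine map is at most `ξ`,
the bound `B n ≤ ξ` propagates, and `B` is dominated by the iterates of the affine map started
at `ξ`, which decrease geometrically to the fixed point.
-/

open scoped Topology

section ArithGeom

variable {R : Type*} {u : ℕ → R} {r c u₀ M : R}

theorem le_of_le_imp_succ_le_mul_add [Semiring R] [PartialOrder R] [IsOrderedRing R]
    (hr : 0 ≤ r) (hM : r * M + c ≤ M) (h₀ : u 0 ≤ M)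
    (hu : ∀ n, u n ≤ M → u (n + 1) ≤ r * u n + c) (n : ℕ) : u n ≤ M := by
  induction n with
  | zero => exact h₀
  | succ n ih =>
    calc u (n + 1) ≤ r * u n + c := hu n ih
      _ ≤ r * M + c := by gcongr
      _ ≤ M := hM

theorem le_arithGeom [Semiring R] [PartialOrder R] [IsOrderedRing R]
    (hr : 0 ≤ r) (h₀ : u 0 ≤ u₀) (hu : ∀ n, u (n + 1) ≤ r * u n + c) (n : ℕ) :
    u n ≤ arithGeom r c u₀ n := by
  have hmono : Monotone fun x ↦ r * x + c := (monotone_id.const_mul hr).add_const c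
  exact hmono.seq_le_seq n h₀ (fun k _ ↦ hu k) fun k _ ↦ (arithGeom_succ k).ge

variable [Field R] [LinearOrder R] [IsStrictOrderedRing R]

theorem arithGeom_le_pow_mul_add_div (hr₀ : 0 ≤ r) (hr₁ : r < 1) (hc : 0 ≤ c) (n : ℕ) :
    arithGeom r c u₀ n ≤ r ^ n * u₀ + c / (1 - r) := by
  have hfix : 0 ≤ c / (1 - r) := div_nonneg hc (sub_nonneg.mpr hr₁.le)
  rw [arithGeom_eq hr₁.ne]
  gcongr
  exact sub_le_self u₀ hfix

theorem mul_add_le_self_iff_div_one_sub_le (hr : r < 1) : r * M + c ≤ M ↔ c / (1 - r) ≤ M := by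
  rw [div_le_iff₀ (sub_pos.mpr hr), mul_one_sub, le_sub_iff_add_le', mul_comm r M]

theorem div_one_sub_le_two_sub_div_mul (hr : r < 1) (hc : 0 ≤ c) :
    c / (1 - r) ≤ (2 - r) / (1 - r) * c := by
  rw [div_mul_eq_mul_div]
  exact div_le_div_of_nonneg_right (le_mul_of_one_le_left hc (by linarith)) (sub_nonneg.mpr hr.le)

end ArithGeom

theorem mul_add_mul_sq_le_add_mul_mul {R : Type*} [CommSemiring R] [PartialOrder R]
    [IsOrderedRing R] {a b x M : R} (hb : 0 ≤ b) (hx : 0 ≤ x) (hxM : x ≤ M) :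
    a * x + b * x ^ 2 ≤ (a + b * M) * x := by
  calc a * x + b * x ^ 2 = a * x + b * x * x := by ring
    _ ≤ a * x + b * M * x := by gcongr
    _ = (a + b * M) * x := by ring

theorem limsup_le_of_le_of_tendsto {α β : Type*} [ConditionallyCompleteLinearOrder β]
    [TopologicalSpace β] [OrderTopology β] {f : Filter α} [f.NeBot] {u v : α → β} {l : β}
    (hu : f.IsCoboundedUnder (· ≤ ·) u) (huv : u ≤ᶠ[f] v) (hv : Tendsto v f (𝓝 l)) :
    limsup u f ≤ l :=
  hv.limsup_eq ▸ limsup_le_limsup huv hu hv.isBoundedUnder_le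

theorem near_stability_degree_two_general {a b ξ η ε : ℝ} {B : ℕ → ℝ} (hb : 0 ≤ b)
    (hη : η = a + b * ξ) (hη₀ : 0 ≤ η) (hη₁ : η < 1) (hε : 0 ≤ ε) (hξ : ε / (1 - η) ≤ ξ)
    (hBnn : ∀ n, 0 ≤ B n) (hB0 : B 0 ≤ ξ)
    (hrec : ∀ n, B (n + 1) ≤ a * B n + b * B n ^ 2 + ε) :
    (∀ n, B n ≤ ξ ∧ B n ≤ η ^ n * ξ + ε / (1 - η)) ∧ limsup B atTop ≤ ε / (1 - η) := by
  have hstep (n : ℕ) (hn : B n ≤ ξ) : B (n + 1) ≤ η * B n + ε :=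
    calc B (n + 1) ≤ a * B n + b * B n ^ 2 + ε := hrec n
      _ ≤ (a + b * ξ) * B n + ε := by gcongr; exact mul_add_mul_sq_le_add_mul_mul hb (hBnn n) hn
      _ = η * B n + ε := by rw [hη]
  have hBξ : ∀ n, B n ≤ ξ :=
    le_of_le_imp_succ_le_mul_add hη₀ ((mul_add_le_self_iff_div_one_sub_le hη₁).mpr hξ) hB0 hstep
  have hBgeom : ∀ n, B n ≤ arithGeom η ε ξ n :=
    le_arithGeom hη₀ hB0 fun n ↦ hstep n (hBξ n)
  have hBcobdd : IsCoboundedUnder (· ≤ ·) atTop B :=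
    (isBoundedUnder_of ⟨0, hBnn⟩ : IsBoundedUnder (· ≥ ·) atTop B).isCoboundedUnder_le
  exact ⟨fun n ↦ ⟨hBξ n, (hBgeom n).trans (arithGeom_le_pow_mul_add_div hη₀ hη₁ hε n)⟩,
    limsup_le_of_le_of_tendsto hBcobdd (.of_forall hBgeom)
      (tendsto_arithGeom_nhds_of_lt_one hη₀ hη₁)⟩

/-- Near-stability recursion for the Battacharyya parameters of the saturated BP decoder
with minimum variable degree two.  With `ε = e^{-K/2}`,
`η = λ₂·C·ρ + (1-λ₂)·C·ρ²·ξ < 1` and `ξ ≥ ((2-η)/(1-η))·ε`, any nonnegative sequence with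
`B₀ ≤ ξ` and `B_{n+1} ≤ λ₂·C·ρ·B_n + (1-λ₂)·C·ρ²·B_n² + ε` stays below `ξ`, satisfies
`B_n ≤ η^n·ξ + ε/(1-η)`, and has `limsup B_n ≤ e^{-K/2}/(1-η)`. -/
theorem near_stability_degree_two (lam2 C ρ K ξ η : ℝ)
    (hlam2 : lam2 ∈ Set.Icc (0 : ℝ) 1) (hC : 0 ≤ C) (hρ : 0 ≤ ρ) (hK : 0 < K)
    (hξpos : 0 < ξ)
    (hη : η = lam2 * C * ρ + (1 - lam2) * C * ρ ^ 2 * ξ) (hηlt : η < 1)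
    (hξ : ξ ≥ ((2 - η) / (1 - η)) * Real.exp (-K / 2))
    (B : ℕ → ℝ) (hBnn : ∀ n, 0 ≤ B n) (hB0 : B 0 ≤ ξ)
    (hrec : ∀ n, B (n + 1) ≤
      lam2 * C * ρ * B n + (1 - lam2) * C * ρ ^ 2 * (B n) ^ 2 + Real.exp (-K / 2)) :
    (∀ n, B n ≤ ξ ∧ B n ≤ η ^ n * ξ + Real.exp (-K / 2) / (1 - η)) ∧
      limsup B atTop ≤ Real.exp (-K / 2) / (1 - η) := by
  obtain ⟨h_nonneg, h_one_sub⟩ : 0 ≤ lam2 ∧ 0 ≤ 1 - lam2 := ⟨hlam2.1, sub_nonneg.mpr hlam2.2⟩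
  exact near_stability_degree_two_general (by positivity) hη (hη ▸ by positivity) hηlt
    (exp_nonneg _) ((div_one_sub_le_two_sub_div_mul hηlt (exp_nonneg _)).trans hξ) hBnn hB0 hrec
end

section
/- Let λ₃ ∈ [0,1], let C ≥ 0 and ρ ≥ 0 and K > 0, and write ε = e^{−K/2}. Suppose ξ > 0 satisfies λ₃·C·ρ²·ξ + (1−λ₃)·C·ρ³·ξ² = 1/2 and 2ε < ξ. Let (B_n)_{n≥0} be a sequence of nonnegative reals with B₀ ≤ ξ and B_{n+1} ≤ λ₃·C·ρ²·B_n² + (1−λ₃)·C·ρ³·B_n³ + ε for all n. Then for every n, B_n ≤ ξ and B_n ≤ 2ε + 2^{−n}·ξ; in particular limsup_n B_n ≤ 2·e^{−K/2}. -/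
open Real Filter

/-! On `[0, ξ]` the noiseless update satisfies `f y ≤ q * y` with `q < 1`: each monomial of `f` has
degree at least two, so `f y / y` is largest at `y = ξ`. Hence the perturbed recursion is dominated
by an affine contraction whose fixed point is `2ε` for `q = 1/2`. As this fixed point lies below
`ξ`, the interval is never left, and the excess over the fixed point decays geometrically. -/

theorem quadratic_add_cubic_le_mul {R : Type*} [CommSemiring R] [PartialOrder R] [IsOrderedRing R]
    {a b y ξ : R} (ha : 0 ≤ a) (hb : 0 ≤ b) (hy : 0 ≤ y) (hyξ : y ≤ ξ) :
    a * y ^ 2 + b * y ^ 3 ≤ (a * ξ + b * ξ ^ 2) * y :=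
  calc
    a * y ^ 2 + b * y ^ 3 = (a * y + b * y ^ 2) * y := by ring
    _ ≤ (a * ξ + b * ξ ^ 2) * y := by gcongr

theorem le_of_succ_le_contraction_of_le {R : Type*} [CommRing R] [PartialOrder R] [IsOrderedRing R]
    {q L ξ : R} {x : ℕ → R} (hq₀ : 0 ≤ q) (hq₁ : q ≤ 1) (hL : L ≤ ξ) (hx₀ : x 0 ≤ ξ)
    (hstep : ∀ n, x n ≤ ξ → x (n + 1) ≤ q * x n + (1 - q) * L) (n : ℕ) : x n ≤ ξ := by
  induction n with
  | zero => exact hx₀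
  | succ n ih =>
    calc
      x (n + 1) ≤ q * x n + (1 - q) * L := hstep n ih
      _ ≤ q * ξ + (1 - q) * ξ :=
        add_le_add (mul_le_mul_of_nonneg_left ih hq₀)
          (mul_le_mul_of_nonneg_left hL (sub_nonneg.mpr hq₁))
      _ = ξ := by ring

theorem le_add_pow_mul_of_succ_le_contraction {q L : ℝ} {x : ℕ → ℝ} (hq : 0 ≤ q)
    (hstep : ∀ n, x (n + 1) ≤ q * x n + (1 - q) * L) (n : ℕ) :
    x n ≤ L + q ^ n * (x 0 - L) := by
  have hexcess : x n - L ≤ q ^ n * (x 0 - L) :=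
    le_geom (u := fun k => x k - L) hq n fun k _ => by linarith [hstep k]
  linarith

theorem limsup_le_of_le_add_pow_mul {q L c : ℝ} {x : ℕ → ℝ} (hq₀ : 0 ≤ q) (hq₁ : q < 1)
    (hx : IsBoundedUnder (· ≥ ·) atTop x) (hle : ∀ n, x n ≤ L + q ^ n * c) :
    limsup x atTop ≤ L := by
  have hlim : Tendsto (fun n : ℕ => L + q ^ n * c) atTop (nhds L) := by
    simpa using ((tendsto_pow_atTop_nhds_zero_of_lt_one hq₀ hq₁).mul_const c).const_add L
  calc
    limsup x atTop ≤ limsup (fun n : ℕ => L + q ^ n * c) atTop :=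
      limsup_le_limsup (.of_forall hle) hx.isCoboundedUnder_le hlim.isBoundedUnder_le
    _ = L := hlim.limsup_eq

/-- The perturbation is written `(1 - q) * L` to make `L` the fixed point of the dominating
contraction; a perturbation `ε` has `L = ε / (1 - q)`. -/
theorem near_stability_degree_three_general {f : ℝ → ℝ} {q L ξ : ℝ} {x : ℕ → ℝ}
    (hq : q ∈ Set.Ico 0 1) (hL : L ∈ Set.Icc 0 ξ) (hf : ∀ y ∈ Set.Icc 0 ξ, f y ≤ q * y)
    (hx : ∀ n, 0 ≤ x n) (hx₀ : x 0 ≤ ξ) (hrec : ∀ n, x (n + 1) ≤ f (x n) + (1 - q) * L) :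
    (∀ n, x n ≤ ξ ∧ x n ≤ L + q ^ n * ξ) ∧ limsup x atTop ≤ L := by
  obtain ⟨hq₀, hq₁⟩ := hq
  have hstep (n : ℕ) (hn : x n ≤ ξ) : x (n + 1) ≤ q * x n + (1 - q) * L :=
    (hrec n).trans (add_le_add_left (hf (x n) ⟨hx n, hn⟩) _)
  have hxξ : ∀ n, x n ≤ ξ := le_of_succ_le_contraction_of_le hq₀ hq₁.le hL.2 hx₀ hstep
  have hgeom (n : ℕ) : x n ≤ L + q ^ n * ξ :=
    calc
      x n ≤ L + q ^ n * (x 0 - L) :=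
        le_add_pow_mul_of_succ_le_contraction hq₀ (fun k => hstep k (hxξ k)) n
      _ ≤ L + q ^ n * ξ := by
        gcongr
        exact (sub_le_self _ hL.1).trans hx₀
  exact ⟨fun n => ⟨hxξ n, hgeom n⟩,
    limsup_le_of_le_add_pow_mul hq₀ hq₁ (isBoundedUnder_of ⟨0, hx⟩) hgeom⟩

/-- Near-stability recursion for the Battacharyya parameters of the saturated BP decoder
with minimum variable degree three.  With `ε = e^{-K/2}`, `ξ > 0` the positive solution of
`λ₃·C·ρ²·ξ + (1-λ₃)·C·ρ³·ξ² = 1/2` and `2ε < ξ`, any nonnegative sequence with `B₀ ≤ ξ`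
and `B_{n+1} ≤ λ₃·C·ρ²·B_n² + (1-λ₃)·C·ρ³·B_n³ + ε` stays below `ξ`, satisfies
`B_n ≤ 2ε + 2^{-n}·ξ`, and has `limsup B_n ≤ 2·e^{-K/2}`. -/
theorem near_stability_degree_three (lam3 C ρ K ξ : ℝ)
    (hlam3 : lam3 ∈ Set.Icc (0 : ℝ) 1) (hC : 0 ≤ C) (hρ : 0 ≤ ρ) (hK : 0 < K)
    (hξpos : 0 < ξ)
    (hξeq : lam3 * C * ρ ^ 2 * ξ + (1 - lam3) * C * ρ ^ 3 * ξ ^ 2 = 1 / 2)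
    (hξ : 2 * Real.exp (-K / 2) < ξ)
    (B : ℕ → ℝ) (hBnn : ∀ n, 0 ≤ B n) (hB0 : B 0 ≤ ξ)
    (hrec : ∀ n, B (n + 1) ≤
      lam3 * C * ρ ^ 2 * (B n) ^ 2 + (1 - lam3) * C * ρ ^ 3 * (B n) ^ 3 + Real.exp (-K / 2)) :
    (∀ n, B n ≤ ξ ∧ B n ≤ 2 * Real.exp (-K / 2) + (1 / 2) ^ n * ξ) ∧
      limsup B atTop ≤ 2 * Real.exp (-K / 2) := by
  have ha : 0 ≤ lam3 * C * ρ ^ 2 := mul_nonneg (mul_nonneg hlam3.1 hC) (pow_nonneg hρ 2)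
  have hb : 0 ≤ (1 - lam3) * C * ρ ^ 3 :=
    mul_nonneg (mul_nonneg (sub_nonneg.mpr hlam3.2) hC) (pow_nonneg hρ 3)
  exact near_stability_degree_three_general (by norm_num) ⟨by positivity, hξ.le⟩
    (fun y hy => hξeq ▸ quadratic_add_cubic_le_mul ha hb hy.1 hy.2) hBnn hB0
    fun n => (hrec n).trans_eq (by ring)
end

section
/- Let K > 0 and let d ≥ 1 be a natural number. Define K_d = 2·artanh((tanh(K/2))^d), the output magnitude of a belief-propagation check node of degree d+1 when all d incoming messages have magnitude K. Then K − ln d ≤ K_d ≤ K. -/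
open Real

/-!
With `t = tanh (K / 2)`, the lower bound amounts to
`(1 + t) / (1 - t) ≤ d * ((1 + t ^ d) / (1 - t ^ d))`, or, after division of `1 - t ^ d` by `1 - t`,
to `(1 + t) * (1 + t + ⋯ + t ^ (d - 1)) ≤ d * (1 + t ^ d)`. The left side is the sum over `i < d`
of `t ^ i + t ^ (d - i)`, and each of these terms is at most `1 + t ^ d`
because `(1 - t ^ i) * (1 - t ^ (d - i)) ≥ 0`.
-/

section OrderedRing

variable {R : Type*} [CommRing R] [LinearOrder R] [IsStrictOrderedRing R] {x : R}

lemma pow_add_pow_le_one_add_pow_add (hx : |x| ≤ 1) (m n : ℕ) :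
    x ^ m + x ^ n ≤ 1 + x ^ (m + n) := by
  have pow_le_one (k : ℕ) : x ^ k ≤ 1 :=
    (le_abs_self _).trans <| (abs_pow x k).trans_le <| pow_le_one₀ (abs_nonneg x) hx
  have : 0 ≤ (1 - x ^ m) * (1 - x ^ n) :=
    mul_nonneg (sub_nonneg.2 (pow_le_one m)) (sub_nonneg.2 (pow_le_one n))
  linear_combination this

lemma one_add_mul_geom_sum_le (hx : |x| ≤ 1) (d : ℕ) :
    (1 + x) * ∑ i ∈ Finset.range d, x ^ i ≤ d * (1 + x ^ d) := by
  have reflected : x * ∑ i ∈ Finset.range d, x ^ i = ∑ i ∈ Finset.range d, x ^ (d - i) := by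
    rw [← Finset.sum_range_reflect, Finset.mul_sum]
    refine Finset.sum_congr rfl fun i hi ↦ ?_
    rw [← pow_succ']
    congr 1
    have := Finset.mem_range.1 hi
    omega
  calc (1 + x) * ∑ i ∈ Finset.range d, x ^ i
      = ∑ i ∈ Finset.range d, (x ^ i + x ^ (d - i)) := by
        rw [one_add_mul, reflected, Finset.sum_add_distrib]
    _ ≤ ∑ _i ∈ Finset.range d, (1 + x ^ d) := by
        refine Finset.sum_le_sum fun i hi ↦ ?_
        simpa only [Nat.add_sub_of_le (Finset.mem_range.1 hi).le] using
          pow_add_pow_le_one_add_pow_add hx i (d - i)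
    _ = d * (1 + x ^ d) := by rw [Finset.sum_const, Finset.card_range, nsmul_eq_mul]

lemma one_add_mul_one_sub_pow_le (hx : |x| ≤ 1) (d : ℕ) :
    (1 + x) * (1 - x ^ d) ≤ d * (1 + x ^ d) * (1 - x) :=
  calc (1 + x) * (1 - x ^ d)
      = (1 + x) * (∑ i ∈ Finset.range d, x ^ i) * (1 - x) := by
        rw [mul_assoc, geom_sum_mul_neg]
    _ ≤ d * (1 + x ^ d) * (1 - x) :=
        mul_le_mul_of_nonneg_right (one_add_mul_geom_sum_le hx d)
          (sub_nonneg.2 ((le_abs_self x).trans hx))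

lemma pow_mem_Ioo_neg_one_one (hx : x ∈ Set.Ioo (-1) 1) {d : ℕ} (hd : d ≠ 0) :
    x ^ d ∈ Set.Ioo (-1) 1 := by
  rw [Set.mem_Ioo, ← abs_lt] at hx ⊢
  rw [abs_pow]
  exact pow_lt_one₀ (abs_nonneg x) hx hd

end OrderedRing

lemma artanh_eq_real_artanh {x : ℝ} (hx : x ∈ Set.Icc (-1) 1) :
    _root_.artanh x = Real.artanh x :=
  (Real.artanh_eq_half_log hx).symm

lemma two_mul_real_artanh_eq_log {x : ℝ} (hx : x ∈ Set.Icc (-1) 1) :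
    2 * Real.artanh x = log ((1 + x) / (1 - x)) := by
  rw [Real.artanh_eq_half_log hx]
  ring

lemma two_mul_real_artanh_sub_log_le {x : ℝ} (hx : x ∈ Set.Ioo (-1) 1) {d : ℕ} (hd : d ≠ 0) :
    2 * Real.artanh x - log d ≤ 2 * Real.artanh (x ^ d) := by
  have hxd := pow_mem_Ioo_neg_one_one hx hd
  have one_add_pos {y : ℝ} (hy : y ∈ Set.Ioo (-1) 1) : 0 < 1 + y := by linarith [hy.1]
  have one_sub_pos {y : ℝ} (hy : y ∈ Set.Ioo (-1) 1) : 0 < 1 - y := sub_pos.2 hy.2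
  have ratio_pos {y : ℝ} (hy : y ∈ Set.Ioo (-1) 1) : 0 < (1 + y) / (1 - y) :=
    div_pos (one_add_pos hy) (one_sub_pos hy)
  have ratio_le : (1 + x) / (1 - x) ≤ d * ((1 + x ^ d) / (1 - x ^ d)) := by
    rw [← mul_div_assoc, div_le_div_iff₀ (one_sub_pos hx) (one_sub_pos hxd)]
    exact one_add_mul_one_sub_pow_le (abs_lt.2 hx).le d
  rw [two_mul_real_artanh_eq_log (Set.Ioo_subset_Icc_self hx),
    two_mul_real_artanh_eq_log (Set.Ioo_subset_Icc_self hxd), sub_le_iff_le_add',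
    ← log_mul (Nat.cast_ne_zero.2 hd) (ratio_pos hxd).ne']
  exact log_le_log (ratio_pos hx) ratio_le

lemma real_artanh_pow_le {x : ℝ} (hx : x ∈ Set.Ico 0 1) {d : ℕ} (hd : d ≠ 0) :
    Real.artanh (x ^ d) ≤ Real.artanh x :=
  Real.artanh_le_artanh (neg_one_lt_zero.trans_le (pow_nonneg hx.1 d)) hx.2
    (pow_le_of_le_one hx.1 hx.2.le hd)

/-- For `K > 0` and `d ≥ 1`, the check-node output magnitude
`K_d = 2·artanh((tanh(K/2))^d)` satisfies `K - ln d ≤ K_d ≤ K`. -/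
theorem checknode_magnitude_bounds (K : ℝ) (hK : 0 < K) (d : ℕ) (hd : 1 ≤ d) :
    K - Real.log d ≤ 2 * _root_.artanh ((Real.tanh (K / 2)) ^ d) ∧
      2 * _root_.artanh ((Real.tanh (K / 2)) ^ d) ≤ K := by
  have hd₀ : d ≠ 0 := Nat.one_le_iff_ne_zero.1 hd
  have htanh : tanh (K / 2) ∈ Set.Ioo (-1) 1 := ⟨neg_one_lt_tanh _, tanh_lt_one _⟩
  have htanh_nonneg : 0 ≤ tanh (K / 2) := by
    rw [tanh_eq_sinh_div_cosh]
    exact div_nonneg (sinh_nonneg_iff.2 (half_pos hK).le) (cosh_pos _).le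
  have hK_eq : 2 * Real.artanh (tanh (K / 2)) = K := by
    rw [artanh_tanh, mul_div_cancel₀ K two_ne_zero]
  rw [artanh_eq_real_artanh (Set.Ioo_subset_Icc_self (pow_mem_Ioo_neg_one_one htanh hd₀))]
  constructor
  · simpa only [hK_eq] using two_mul_real_artanh_sub_log_le htanh hd₀
  · linarith [real_artanh_pow_le ⟨htanh_nonneg, htanh.2⟩ hd₀]
end
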